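/- Let T be a finite rooted ternary tree with internal nodes T⁰ partitioned into O (nodes at odd depth) and E (nodes at even depth), let t ∈ [0,1], and σ_v ∈ ℝ for v ∈ T⁰. Then |∫_{R(T,t)} ∏_{v∈T⁰} e^{iσ_v s_v} ds| ≤ 2^{|T⁰|} t^{|E|} ∏_{v∈O} ⟨σ_v⟩^{−1}. -/

import Mathlib

open MeasureTheory

/-- Finite rooted trees in which every node has either zero or three children. -/
inductive TernaryTree : Type where
  | leaf : TernaryTree
  | node : TernaryTree → TernaryTree → TernaryTree → TernaryTree

/-- The type of internal (non-terminal) nodes of a ternary tree `T`, i.e. `T⁰`. -/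
def TernaryTree.Idx : TernaryTree → Type
  | .leaf => Empty
  | .node a b c => Unit ⊕ (a.Idx ⊕ b.Idx ⊕ c.Idx)

instance TernaryTree.instFintypeIdx : (T : TernaryTree) → Fintype T.Idx
  | .leaf => inferInstanceAs (Fintype Empty)
  | .node a b c =>
    letI := instFintypeIdx a
    letI := instFintypeIdx b
    letI := instFintypeIdx c
    inferInstanceAs (Fintype (Unit ⊕ (a.Idx ⊕ b.Idx ⊕ c.Idx)))

/-- `T.desc v w` means that `v` is a (proper) descendant of `w` in `T`. -/
def TernaryTree.desc : (T : TernaryTree) → T.Idx → T.Idx → Prop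
  | .leaf, v, _ => v.elim
  | .node _ _ _, .inl _, _ => False
  | .node _ _ _, .inr _, .inl _ => True
  | .node a _ _, .inr (.inl v'), .inr (.inl w') => a.desc v' w'
  | .node _ b _, .inr (.inr (.inl v')), .inr (.inr (.inl w')) => b.desc v' w'
  | .node _ _ c, .inr (.inr (.inr v')), .inr (.inr (.inr w')) => c.desc v' w'
  | .node _ _ _, .inr _, .inr _ => False

/-- The depth (level) of a node: the length of the path to the root. -/
def TernaryTree.depth : (T : TernaryTree) → T.Idx → ℕ
  | .leaf, v => v.elim
  | .node _ _ _, .inl _ => 0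
  | .node a _ _, .inr (.inl v') => a.depth v' + 1
  | .node _ b _, .inr (.inr (.inl v')) => b.depth v' + 1
  | .node _ _ c, .inr (.inr (.inr v')) => c.depth v' + 1

/-- The tree-ordered simplex `R(T,t)`. -/
def TernaryTree.simplex (T : TernaryTree) (t : ℝ) : Set (T.Idx → ℝ) :=
  {s | (∀ v, s v ∈ Set.Icc 0 t) ∧ ∀ v w, T.desc v w → s v ≤ s w}

/-!
Integrating out the root first, the integral over `R(T,t)` becomes an iterated integral `Φ_T(t)`,
where `Φ_T(r) = ∫ u in 0..r, Φ_a(u) Φ_b(u) Φ_c(u) e^{iσu}` for a tree with root frequency `σ` and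
subtrees `a`, `b`, `c`. A node at odd depth should gain from the oscillation of `e^{iσu}`, although
this factor is multiplied by the functions `Φ` of its children. Those children have even depth, and
one integration by parts shows that multiplication by a primitive `∫ u in 0..r, g u` enlarges the
integrals of an oscillating function over subintervals of `[0,t]` by a factor of at most the
`L¹` norm of `g`. Hence the loss at the children is just the trivial bound for them. What matters
about `O` is that no node of `O` is a child of another.

The bound for a single oscillating factor is `√(4+t²)⟨σ⟩⁻¹`, and `2⟨σ⟩⁻¹` would be false. The excess
`(√5/2)^|O|` is absorbed by the factor `2^|E|`, since `|O| ≤ 3|E|` in a ternary tree.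
-/

theorem integral_norm_mul_le {A : Type*} [NormedRing A] {a b : ℝ} {f φ : ℝ → A} {M B : ℝ}
    (hab : a ≤ b) (hf : Continuous f) (hφ : Continuous φ)
    (hM : ∀ r ∈ Set.Icc a b, ‖f r‖ ≤ M) (hB : ∫ u in a..b, ‖φ u‖ ≤ B) :
    ∫ u in a..b, ‖f u * φ u‖ ≤ M * B := by
  have hM0 : 0 ≤ M := (norm_nonneg _).trans (hM a ⟨le_rfl, hab⟩)
  calc ∫ u in a..b, ‖f u * φ u‖
      ≤ ∫ u in a..b, M * ‖φ u‖ := by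
        refine intervalIntegral.integral_mono_on hab
          ((hf.mul hφ).norm.intervalIntegrable a b)
          ((hφ.norm.const_mul M).intervalIntegrable a b) fun u hu => ?_
        exact norm_mul_le_of_le (hM u hu) le_rfl
    _ = M * ∫ u in a..b, ‖φ u‖ := intervalIntegral.integral_const_mul M _
    _ ≤ M * B := mul_le_mul_of_nonneg_left hB hM0

section PrimitiveMultiplier

variable {A : Type*} [NormedRing A] [NormedAlgebra ℝ A] {a b : ℝ}

/-- The integrals of `φ` over all subintervals of `[a, b]` are bounded by `K`: the measure of
oscillation used for the factors at the nodes that are integrated first. -/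
def HasPrimitiveBound (a b : ℝ) (φ : ℝ → A) (K : ℝ) : Prop :=
  ∀ x s, a ≤ x → x ≤ s → s ≤ b → ‖∫ r in x..s, φ r‖ ≤ K

/-- Multiplication by `f` scales the bounds `HasPrimitiveBound` of continuous functions by `M`. For
smooth `f` this is implied by a bound on `|f(a)|` plus the total variation of `f`; unlike that
bound, it is visibly submultiplicative. -/
def IsPrimitiveMultiplier (a b : ℝ) (f : ℝ → A) (M : ℝ) : Prop :=
  ∀ (φ : ℝ → A) (K : ℝ), Continuous φ → HasPrimitiveBound a b φ K →
    HasPrimitiveBound a b (f * φ) (M * K)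

theorem HasPrimitiveBound.nonneg {φ : ℝ → A} {K : ℝ} (h : HasPrimitiveBound a b φ K)
    (hab : a ≤ b) : 0 ≤ K :=
  (norm_nonneg _).trans (h a a le_rfl le_rfl hab)

theorem isPrimitiveMultiplier_one : IsPrimitiveMultiplier a b (1 : ℝ → A) 1 := by
  intro φ K _ hK
  simpa only [one_mul] using hK

theorem IsPrimitiveMultiplier.mul {f g : ℝ → A} {M N : ℝ} (hf : IsPrimitiveMultiplier a b f M)
    (hg : IsPrimitiveMultiplier a b g N) (hgc : Continuous g) :
    IsPrimitiveMultiplier a b (f * g) (M * N) := by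
  intro φ K hφ hK
  simpa only [mul_assoc] using hf _ _ (hgc.mul hφ) (hg φ K hφ hK)

theorem norm_primitive_le_of_integral_norm_le {g : ℝ → A} {M r : ℝ} (hg : Continuous g)
    (hM : ∫ u in a..b, ‖g u‖ ≤ M) (hr : r ∈ Set.Icc a b) : ‖∫ u in a..r, g u‖ ≤ M :=
  calc ‖∫ u in a..r, g u‖
      ≤ ∫ u in a..r, ‖g u‖ := intervalIntegral.norm_integral_le_integral_norm hr.1
    _ ≤ ∫ u in a..b, ‖g u‖ :=
        intervalIntegral.integral_mono_interval le_rfl hr.1 hr.2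
          (.of_forall fun _ => norm_nonneg _) (hg.norm.intervalIntegrable a b)
    _ ≤ M := hM

variable [CompleteSpace A]

theorem integral_primitive_mul {g φ : ℝ → A} (hg : Continuous g) (hφ : Continuous φ)
    (a x s : ℝ) :
    ∫ r in x..s, (∫ u in a..r, g u) * φ r =
      (∫ u in a..x, g u) * (∫ r in x..s, φ r) + ∫ r in x..s, g r * ∫ u in r..s, φ u := by
  have hG : ∀ r, HasDerivAt (fun r => ∫ u in a..r, g u) (g r) r := fun r =>
    (hg.integral_hasStrictDerivAt a r).hasDerivAt
  have hΨ : ∀ r, HasDerivAt (fun r => -∫ u in r..s, φ u) (φ r) r := fun r => by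
    simpa only [intervalIntegral.integral_symm s, neg_neg] using
      (hφ.integral_hasStrictDerivAt s r).hasDerivAt
  rw [intervalIntegral.integral_mul_deriv_eq_deriv_mul (fun r _ => hG r) (fun r _ => hΨ r)
    (hg.intervalIntegrable x s) (hφ.intervalIntegrable x s)]
  simp only [intervalIntegral.integral_same, neg_zero, mul_zero, mul_neg,
    intervalIntegral.integral_neg, sub_neg_eq_add, zero_add]

theorem IsPrimitiveMultiplier.primitive {g : ℝ → A} {M : ℝ} (hg : Continuous g)
    (hM : ∫ u in a..b, ‖g u‖ ≤ M) :
    IsPrimitiveMultiplier a b (fun r => ∫ u in a..r, g u) M := by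
  intro φ K hφ hK x s hax hxs hsb
  have hK0 : 0 ≤ K := hK.nonneg (hax.trans (hxs.trans hsb))
  have hint : ∀ p q, IntervalIntegrable (fun u => ‖g u‖) volume p q :=
    hg.norm.intervalIntegrable
  have hboundary : ‖(∫ u in a..x, g u) * ∫ r in x..s, φ r‖ ≤ (∫ u in a..x, ‖g u‖) * K :=
    norm_mul_le_of_le (intervalIntegral.norm_integral_le_integral_norm hax)
      (hK x s hax hxs hsb)
  have hinterior : ‖∫ r in x..s, g r * ∫ u in r..s, φ u‖ ≤ (∫ u in x..s, ‖g u‖) * K := by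
    rw [← intervalIntegral.integral_mul_const]
    refine intervalIntegral.norm_integral_le_of_norm_le hxs (.of_forall fun r hr => ?_)
      ((hint x s).mul_const K)
    exact norm_mul_le_of_le le_rfl (hK r s (hax.trans hr.1.le) hr.2 hsb)
  calc ‖∫ r in x..s, (∫ u in a..r, g u) * φ r‖
      ≤ (∫ u in a..x, ‖g u‖) * K + (∫ u in x..s, ‖g u‖) * K := by
        rw [integral_primitive_mul hg hφ]
        exact norm_add_le_of_le hboundary hinterior
    _ = (∫ u in a..s, ‖g u‖) * K := by
        rw [← add_mul, intervalIntegral.integral_add_adjacent_intervals (hint a x) (hint x s)]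
    _ ≤ (∫ u in a..b, ‖g u‖) * K := by
        refine mul_le_mul_of_nonneg_right ?_ hK0
        exact intervalIntegral.integral_mono_interval le_rfl (hax.trans hxs) hsb
          (.of_forall fun _ => norm_nonneg _) (hint a b)
    _ ≤ M * K := mul_le_mul_of_nonneg_right hM hK0

end PrimitiveMultiplier

theorem norm_cexp_I_mul_ofReal_mul_ofReal (σ r : ℝ) : ‖Complex.exp (Complex.I * σ * r)‖ = 1 := by
  rw [mul_assoc, ← Complex.ofReal_mul, Complex.norm_exp_I_mul_ofReal]

theorem norm_integral_cexp_mul_abs_le_two (σ x s : ℝ) :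
    ‖∫ r in x..s, Complex.exp (Complex.I * σ * r)‖ * |σ| ≤ 2 := by
  rcases eq_or_ne σ 0 with rfl | hσ
  · simp only [abs_zero, mul_zero, zero_le_two]
  have hIσ : Complex.I * (σ : ℂ) ≠ 0 :=
    mul_ne_zero Complex.I_ne_zero (Complex.ofReal_ne_zero.2 hσ)
  have hnorm : ‖Complex.I * (σ : ℂ)‖ = |σ| := by
    rw [norm_mul, Complex.norm_I, one_mul, Complex.norm_real, Real.norm_eq_abs]
  rw [integral_exp_mul_complex hIσ, norm_div, hnorm, div_mul_cancel₀ _ (abs_ne_zero.2 hσ)]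
  refine (norm_sub_le _ _).trans_eq ?_
  rw [norm_cexp_I_mul_ofReal_mul_ofReal, norm_cexp_I_mul_ofReal_mul_ofReal, one_add_one_eq_two]

theorem hasPrimitiveBound_cexp (σ a b : ℝ) :
    HasPrimitiveBound a b (fun r : ℝ => Complex.exp (Complex.I * σ * r))
      (√(4 + (b - a) ^ 2) * (√(1 + σ ^ 2))⁻¹) := by
  intro x s hax hxs hsb
  set m : ℝ := ‖∫ r in x..s, Complex.exp (Complex.I * σ * r)‖
  have hlen : m ≤ b - a :=
    calc m ≤ 1 * |s - x| := intervalIntegral.norm_integral_le_of_norm_le_const fun r _ =>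
          (norm_cexp_I_mul_ofReal_mul_ofReal σ r).le
      _ ≤ b - a := by rw [one_mul, abs_of_nonneg (sub_nonneg.2 hxs)]; linarith
  have hosc : m * |σ| ≤ 2 := norm_integral_cexp_mul_abs_le_two σ x s
  have hpos : 0 < √(1 + σ ^ 2) := by positivity
  rw [← div_eq_mul_inv, le_div_iff₀ hpos]
  refine Real.le_sqrt_of_sq_le ?_
  calc (m * √(1 + σ ^ 2)) ^ 2 = (m * |σ|) ^ 2 + m ^ 2 := by
        rw [mul_pow, mul_pow, Real.sq_sqrt (by positivity), sq_abs]; ring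
    _ ≤ 2 ^ 2 + (b - a) ^ 2 :=
        add_le_add (pow_le_pow_left₀ (by positivity) hosc 2)
          (pow_le_pow_left₀ (norm_nonneg _) hlen 2)
    _ = 4 + (b - a) ^ 2 := by norm_num

section PiSum

variable {α ι κ 𝕜 : Type*} [MeasurableSpace α] [Fintype ι] [Fintype κ] [RCLike 𝕜]
  (μ : Measure α) [SigmaFinite μ]

theorem integral_pi_sum_mul (f : (ι → α) → 𝕜) (g : (κ → α) → 𝕜) :
    ∫ s : ι ⊕ κ → α, f (fun v => s (.inl v)) * g (fun v => s (.inr v)) ∂.pi (fun _ => μ) =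
      (∫ x, f x ∂.pi (fun _ => μ)) * ∫ y, g y ∂.pi (fun _ => μ) := by
  rw [← integral_prod_mul]
  exact (measurePreserving_sumPiEquivProdPi (X := fun _ : ι ⊕ κ => α) fun _ => μ).integral_comp'
    fun z : (ι → α) × (κ → α) => f z.1 * g z.2

theorem integral_pi_unit_sum {E : Type*} [NormedAddCommGroup E] [NormedSpace ℝ E]
    (f : α → (κ → α) → E)
    (hf : Integrable (fun s : Unit ⊕ κ → α => f (s (.inl ())) fun v => s (.inr v))
      (.pi fun _ => μ)) :
    ∫ s : Unit ⊕ κ → α, f (s (.inl ())) (fun v => s (.inr v)) ∂.pi (fun _ => μ) =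
      ∫ u, ∫ y, f u y ∂.pi (fun _ => μ) ∂μ := by
  have hsplit := measurePreserving_sumPiEquivProdPi (X := fun _ : Unit ⊕ κ => α) fun _ => μ
  have hint : Integrable (fun z : (Unit → α) × (κ → α) => f (z.1 ()) z.2)
      ((Measure.pi fun _ => μ).prod (.pi fun _ => μ)) :=
    (hsplit.integrable_comp_emb (MeasurableEquiv.measurableEmbedding _)).1 hf
  calc ∫ s : Unit ⊕ κ → α, f (s (.inl ())) (fun v => s (.inr v)) ∂.pi (fun _ => μ)
      = ∫ z : (Unit → α) × (κ → α), f (z.1 ()) z.2 ∂(Measure.pi fun _ => μ).prod (.pi fun _ => μ) :=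
        hsplit.integral_comp' fun z => f (z.1 ()) z.2
    _ = ∫ x : Unit → α, ∫ y, f (x ()) y ∂.pi (fun _ => μ) ∂.pi (fun _ => μ) :=
        integral_prod _ hint
    _ = ∫ u, ∫ y, f u y ∂.pi (fun _ => μ) ∂μ :=
        (measurePreserving_funUnique μ Unit).integral_comp'
          fun u => ∫ y, f u y ∂.pi (fun _ => μ)

end PiSum

namespace TernaryTree

variable {a b c T : TernaryTree} {t : ℝ}

instance : IsEmpty leaf.Idx := inferInstanceAs (IsEmpty Empty)

/-- The root of a tree with at least one internal node. -/
abbrev root : (node a b c).Idx := .inl ()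

/-- The inclusion of the internal nodes of the first subtree of the root. -/
abbrev inFst (v : a.Idx) : (node a b c).Idx := .inr (.inl v)

/-- The inclusion of the internal nodes of the second subtree of the root. -/
abbrev inSnd (v : b.Idx) : (node a b c).Idx := .inr (.inr (.inl v))

/-- The inclusion of the internal nodes of the third subtree of the root. -/
abbrev inThd (v : c.Idx) : (node a b c).Idx := .inr (.inr (.inr v))

@[to_additive]
theorem prod_idx_node {M : Type*} [CommMonoid M] (f : (node a b c).Idx → M) :
    ∏ v, f v = (∏ v, f (inFst v)) * (∏ v, f (inSnd v)) * (∏ v, f (inThd v)) * f root := by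
  have hsum (g : Unit ⊕ (a.Idx ⊕ b.Idx ⊕ c.Idx) → M) : ∏ v, g v =
      (∏ v, g (.inr (.inl v))) * (∏ v, g (.inr (.inr (.inl v)))) *
        (∏ v, g (.inr (.inr (.inr v)))) * g (.inl ()) := by
    simp only [Fintype.prod_sum_type, Fintype.prod_unique, PUnit.default_eq_unit]
    rw [mul_comm, ← mul_assoc]
  exact hsum f

theorem card_odd_le_and_card_even_le (T : TernaryTree) :
    (Finset.univ.filter fun v => T.depth v % 2 = 1).card ≤
        3 * (Finset.univ.filter fun v => T.depth v % 2 = 0).card ∧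
      (Finset.univ.filter fun v => T.depth v % 2 = 0).card ≤
        3 * (Finset.univ.filter fun v => T.depth v % 2 = 1).card + 1 := by
  have hodd (n : ℕ) : (n + 1) % 2 = 1 ↔ n % 2 = 0 := by lia
  have heven (n : ℕ) : (n + 1) % 2 = 0 ↔ n % 2 = 1 := by lia
  induction T with
  | leaf => simp only [Finset.univ_eq_empty, Finset.filter_empty, Finset.card_empty]; lia
  | node a b c iha ihb ihc =>
    simp only [Finset.card_filter] at iha ihb ihc ⊢
    simp only [sum_idx_node, depth, hodd, heven, Nat.zero_mod, zero_ne_one, if_true, if_false]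
    lia

theorem card_idx_eq_card_even_add_card_odd (T : TernaryTree) :
    Fintype.card T.Idx = (Finset.univ.filter fun v => T.depth v % 2 = 0).card +
      (Finset.univ.filter fun v => T.depth v % 2 = 1).card := by
  simpa only [Nat.mod_two_not_eq_zero, Finset.card_univ] using
    (Finset.card_filter_add_card_filter_not (s := .univ) fun v => T.depth v % 2 = 0).symm

section Simplex

theorem isClosed_simplex (T : TernaryTree) (t : ℝ) : IsClosed (T.simplex t) := by
  simp only [simplex, Set.ofPred_and, Set.ofPred_forall]
  refine .inter (isClosed_iInter fun v => isClosed_Icc.preimage (continuous_apply v)) ?_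
  exact isClosed_iInter fun v => isClosed_iInter fun w => isClosed_iInter fun _ =>
    isClosed_le (continuous_apply v) (continuous_apply w)

theorem isCompact_simplex (T : TernaryTree) (t : ℝ) : IsCompact (T.simplex t) :=
  (isCompact_univ_pi fun _ => isCompact_Icc).of_isClosed_subset (T.isClosed_simplex t)
    fun _ hs v _ => hs.1 v

theorem mem_simplex_node {s : (node a b c).Idx → ℝ} :
    s ∈ (node a b c).simplex t ↔
      ((fun v => s (inFst v)) ∈ a.simplex (s root) ∧
        (fun v => s (inSnd v)) ∈ b.simplex (s root) ∧
        (fun v => s (inThd v)) ∈ c.simplex (s root)) ∧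
      s root ∈ Set.Icc 0 t := by
  constructor
  · rintro ⟨hbox, hle⟩
    exact ⟨⟨⟨fun v => ⟨(hbox _).1, hle (inFst v) root trivial⟩,
        fun v w => hle (inFst v) (inFst w)⟩,
      ⟨fun v => ⟨(hbox _).1, hle (inSnd v) root trivial⟩,
        fun v w => hle (inSnd v) (inSnd w)⟩,
      ⟨fun v => ⟨(hbox _).1, hle (inThd v) root trivial⟩,
        fun v w => hle (inThd v) (inThd w)⟩⟩, hbox root⟩
  · rintro ⟨⟨⟨boxa, lea⟩, ⟨boxb, leb⟩, ⟨boxc, lec⟩⟩, hroot⟩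
    constructor
    · rintro (_ | v | v | v)
      · exact hroot
      · exact ⟨(boxa v).1, (boxa v).2.trans hroot.2⟩
      · exact ⟨(boxb v).1, (boxb v).2.trans hroot.2⟩
      · exact ⟨(boxc v).1, (boxc v).2.trans hroot.2⟩
    · rintro (_ | v | v | v) (_ | w | w | w) h
      case inr.inl.inl => exact (boxa v).2
      case inr.inr.inl.inl => exact (boxb v).2
      case inr.inr.inr.inl => exact (boxc v).2
      case inr.inl.inr.inl => exact lea v w h
      case inr.inr.inl.inr.inr.inl => exact leb v w h
      case inr.inr.inr.inr.inr.inr => exact lec v w h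
      all_goals exact h.elim

end Simplex

section IteratedIntegral

variable {𝕜 : Type*} [RCLike 𝕜]

/-- The integral of `∏ v, φ v (s v)` over `R(T, r)`, evaluated by integrating over the value
`u ∈ [0, r]` at the root after the three subtrees have been integrated over their simplices
`R(·, u)`. -/
noncomputable def iteratedIntegral : (T : TernaryTree) → (T.Idx → ℝ → 𝕜) → ℝ → 𝕜
  | leaf, _, _ => 1
  | node a b c, φ, r => ∫ u in (0 : ℝ)..r,
      a.iteratedIntegral (fun v => φ (inFst v)) u * b.iteratedIntegral (fun v => φ (inSnd v)) u *
        c.iteratedIntegral (fun v => φ (inThd v)) u * φ root u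

theorem continuous_iteratedIntegral (φ : T.Idx → ℝ → 𝕜) (hφ : ∀ v, Continuous (φ v)) :
    Continuous (T.iteratedIntegral φ) := by
  induction T with
  | leaf => exact continuous_const
  | node a b c iha ihb ihc =>
    exact intervalIntegral.continuous_primitive
      (((((iha _ fun v => hφ (inFst v)).mul (ihb _ fun v => hφ (inSnd v))).mul
        (ihc _ fun v => hφ (inThd v))).mul (hφ root)).intervalIntegrable) 0

/-- The integrand `∏ v, φ v (s v)`, extended by zero outside `R(T, t)`. -/
noncomputable def simplexIntegrand (T : TernaryTree) (φ : T.Idx → ℝ → 𝕜) (t : ℝ) :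
    (T.Idx → ℝ) → 𝕜 :=
  (T.simplex t).indicator fun s => ∏ v, φ v (s v)

theorem integrable_simplexIntegrand (φ : T.Idx → ℝ → 𝕜) (hφ : ∀ v, Continuous (φ v)) (t : ℝ) :
    Integrable (T.simplexIntegrand φ t) (.pi fun _ => volume) := by
  refine (integrable_indicator_iff (T.isClosed_simplex t).measurableSet).2 ?_
  have hcont : Continuous fun s : T.Idx → ℝ => ∏ v, φ v (s v) :=
    continuous_finsetProd _ fun v _ => (hφ v).comp (continuous_apply v)
  exact hcont.continuousOn.integrableOn_compact (T.isCompact_simplex t)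

theorem simplexIntegrand_node (φ : (node a b c).Idx → ℝ → 𝕜) (t : ℝ)
    (s : (node a b c).Idx → ℝ) :
    (node a b c).simplexIntegrand φ t s =
      a.simplexIntegrand (fun v => φ (inFst v)) (s root) (fun v => s (inFst v)) *
        (b.simplexIntegrand (fun v => φ (inSnd v)) (s root) (fun v => s (inSnd v)) *
        c.simplexIntegrand (fun v => φ (inThd v)) (s root) (fun v => s (inThd v))) *
        (Set.Icc 0 t).indicator (φ root) (s root) := by
  classical
  simp only [simplexIntegrand, Set.indicator_apply, ite_zero_mul_ite_zero, mem_simplex_node,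
    prod_idx_node, mul_assoc]

theorem integral_simplexIntegrand (φ : T.Idx → ℝ → 𝕜) (hφ : ∀ v, Continuous (φ v))
    (ht : 0 ≤ t) :
    ∫ s, T.simplexIntegrand φ t s ∂.pi (fun _ => volume) = T.iteratedIntegral φ t := by
  induction T generalizing t with
  | leaf =>
    have hmem : (isEmptyElim : leaf.Idx → ℝ) ∈ leaf.simplex t := ⟨isEmptyElim, isEmptyElim⟩
    rw [Measure.pi_of_empty, integral_dirac, simplexIntegrand, Set.indicator_of_mem hmem,
      Fintype.prod_empty, iteratedIntegral]
  | node a b c iha ihb ihc =>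
    let F (u : ℝ) (y : a.Idx ⊕ b.Idx ⊕ c.Idx → ℝ) : 𝕜 :=
      a.simplexIntegrand (fun v => φ (inFst v)) u (fun v => y (.inl v)) *
        (b.simplexIntegrand (fun v => φ (inSnd v)) u (fun v => y (.inr (.inl v))) *
        c.simplexIntegrand (fun v => φ (inThd v)) u (fun v => y (.inr (.inr v)))) *
        (Set.Icc 0 t).indicator (φ root) u
    have hfactor : (node a b c).simplexIntegrand φ t =
        fun s => F (s root) fun v => s (.inr v) := funext (simplexIntegrand_node φ t)
    have hsubtrees (u : ℝ) : ∫ y, F u y ∂.pi (fun _ => volume) = (Set.Icc 0 t).indicator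
        (fun u => a.iteratedIntegral (fun v => φ (inFst v)) u *
          b.iteratedIntegral (fun v => φ (inSnd v)) u *
          c.iteratedIntegral (fun v => φ (inThd v)) u * φ root u) u := by
      by_cases hu : u ∈ Set.Icc 0 t
      · simp only [F, Set.indicator_of_mem hu]
        rw [integral_mul_const, ← iha _ (fun v => hφ (inFst v)) hu.1,
          ← ihb _ (fun v => hφ (inSnd v)) hu.1, ← ihc _ (fun v => hφ (inThd v)) hu.1,
          mul_assoc (∫ _, _ ∂_), ← integral_pi_sum_mul, ← integral_pi_sum_mul]
      · simp only [F, Set.indicator_of_notMem hu, mul_zero, integral_zero]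
    have hint := integrable_simplexIntegrand φ hφ t
    rw [hfactor] at hint ⊢
    refine (integral_pi_unit_sum volume F hint).trans ?_
    simp_rw [hsubtrees]
    rw [integral_indicator measurableSet_Icc, integral_Icc_eq_integral_Ioc,
      ← intervalIntegral.integral_of_le ht, iteratedIntegral]

end IteratedIntegral

section Independent

/-- No node of `S` is a child of another node of `S`. A child of `w` is encoded as a descendant
of `w` that is one level deeper. -/
def IsIndependent (T : TernaryTree) (S : Set T.Idx) : Prop :=
  ∀ v ∈ S, ∀ w ∈ S, T.desc v w → T.depth v ≠ T.depth w + 1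

theorem isIndependent_odd_depth (T : TernaryTree) : T.IsIndependent {v | T.depth v % 2 = 1} := by
  intro v hv w hw _ hchild
  rw [Set.mem_ofPred_eq] at hv hw
  lia

variable {S : Set (node a b c).Idx}

theorem IsIndependent.preimage_inFst (hS : (node a b c).IsIndependent S) :
    a.IsIndependent (inFst ⁻¹' S) := fun v hv w hw hvw hchild =>
  hS (inFst v) hv (inFst w) hw hvw (congrArg (· + 1) hchild)

theorem IsIndependent.preimage_inSnd (hS : (node a b c).IsIndependent S) :
    b.IsIndependent (inSnd ⁻¹' S) := fun v hv w hw hvw hchild =>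
  hS (inSnd v) hv (inSnd w) hw hvw (congrArg (· + 1) hchild)

theorem IsIndependent.preimage_inThd (hS : (node a b c).IsIndependent S) :
    c.IsIndependent (inThd ⁻¹' S) := fun v hv w hw hvw hchild =>
  hS (inThd v) hv (inThd w) hw hvw (congrArg (· + 1) hchild)

theorem IsIndependent.depth_ne_zero_of_root_mem (hS : (node a b c).IsIndependent S)
    (hroot : root ∈ S) :
    (∀ v, inFst v ∈ S → a.depth v ≠ 0) ∧ (∀ v, inSnd v ∈ S → b.depth v ≠ 0) ∧
      ∀ v, inThd v ∈ S → c.depth v ≠ 0 :=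
  ⟨fun v hv h0 => hS (inFst v) hv root hroot trivial (congrArg (· + 1) h0),
    fun v hv h0 => hS (inSnd v) hv root hroot trivial (congrArg (· + 1) h0),
    fun v hv h0 => hS (inThd v) hv root hroot trivial (congrArg (· + 1) h0)⟩

end Independent

section Bound

variable {𝕜 : Type*} [RCLike 𝕜]

theorem norm_iteratedIntegral_le_and_isPrimitiveMultiplier
    {φ : T.Idx → ℝ → 𝕜} {S : Set T.Idx} {B : T.Idx → ℝ}
    (ht : 0 ≤ t) (hφ : ∀ v, Continuous (φ v)) (hS : T.IsIndependent S)
    (hosc : ∀ v ∈ S, HasPrimitiveBound 0 t (φ v) (B v))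
    (hsize : ∀ v ∉ S, ∫ u in 0..t, ‖φ v u‖ ≤ B v) :
    (∀ r ∈ Set.Icc 0 t, ‖T.iteratedIntegral φ r‖ ≤ ∏ v, B v) ∧
      ((∀ v ∈ S, T.depth v ≠ 0) → IsPrimitiveMultiplier 0 t (T.iteratedIntegral φ) (∏ v, B v)) := by
  induction T with
  | leaf =>
    rw [Fintype.prod_empty]
    exact ⟨fun _ _ => norm_one.le, fun _ => isPrimitiveMultiplier_one⟩
  | node a b c iha ihb ihc =>
    obtain ⟨bounda, multa⟩ := iha (fun v => hφ (inFst v)) hS.preimage_inFst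
      (fun v => hosc (inFst v)) (fun v => hsize (inFst v))
    obtain ⟨boundb, multb⟩ := ihb (fun v => hφ (inSnd v)) hS.preimage_inSnd
      (fun v => hosc (inSnd v)) (fun v => hsize (inSnd v))
    obtain ⟨boundc, multc⟩ := ihc (fun v => hφ (inThd v)) hS.preimage_inThd
      (fun v => hosc (inThd v)) (fun v => hsize (inThd v))
    have conta := continuous_iteratedIntegral _ fun v => hφ (inFst v)
    have contb := continuous_iteratedIntegral _ fun v => hφ (inSnd v)
    have contc := continuous_iteratedIntegral _ fun v => hφ (inThd v)
    have hcont := (conta.mul contb).mul contc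
    rw [prod_idx_node]
    by_cases hroot : root ∈ S
    · obtain ⟨hdeptha, hdepthb, hdepthc⟩ := hS.depth_ne_zero_of_root_mem hroot
      have hmul := ((multa hdeptha).mul (multb hdepthb) contb).mul (multc hdepthc) contc
      exact ⟨fun r hr => hmul _ _ (hφ root) (hosc root hroot) 0 r le_rfl hr.1 hr.2,
        fun hdepth => (hdepth root hroot rfl).elim⟩
    · have hbound := integral_norm_mul_le ht hcont (hφ root)
        (fun r hr => norm_mul_le_of_le (norm_mul_le_of_le (bounda r hr) (boundb r hr))
          (boundc r hr)) (hsize root hroot)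
      have hintegrand := hcont.mul (hφ root)
      exact ⟨fun r hr => norm_primitive_le_of_integral_norm_le hintegrand hbound hr,
        fun _ => .primitive hintegrand hbound⟩

theorem norm_setIntegral_simplex_prod_le {φ : T.Idx → ℝ → 𝕜} {S : Set T.Idx} {B : T.Idx → ℝ}
    (ht : 0 ≤ t) (hφ : ∀ v, Continuous (φ v)) (hS : T.IsIndependent S)
    (hosc : ∀ v ∈ S, HasPrimitiveBound 0 t (φ v) (B v))
    (hsize : ∀ v ∉ S, ∫ u in 0..t, ‖φ v u‖ ≤ B v) :
    ‖∫ s in T.simplex t, ∏ v, φ v (s v) ∂.pi (fun _ => volume)‖ ≤ ∏ v, B v := by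
  rw [← integral_indicator (T.isClosed_simplex t).measurableSet]
  change ‖∫ s, T.simplexIntegrand φ t s ∂_‖ ≤ _
  rw [integral_simplexIntegrand φ hφ ht]
  exact (norm_iteratedIntegral_le_and_isPrimitiveMultiplier ht hφ hS hosc hsize).1 t ⟨ht, le_rfl⟩

end Bound

end TernaryTree

theorem pow_le_two_pow_add {x : ℝ} {m n : ℕ} (hx0 : 0 ≤ x) (hx : x ≤ 5 / 2) (hmn : m ≤ 3 * n) :
    x ^ m ≤ 2 ^ (n + m) := by
  have hx3 : x ^ 3 ≤ 2 ^ 4 := (pow_le_pow_left₀ hx0 hx 3).trans (by norm_num)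
  refine le_of_pow_le_pow_left₀ three_ne_zero (by positivity) ?_
  calc (x ^ m) ^ 3 = (x ^ 3) ^ m := pow_right_comm x m 3
    _ ≤ (2 ^ 4) ^ m := by gcongr
    _ = 2 ^ (4 * m) := (pow_mul 2 4 m).symm
    _ ≤ 2 ^ ((n + m) * 3) := pow_le_pow_right₀ one_le_two (by lia)
    _ = (2 ^ (n + m)) ^ 3 := pow_mul 2 (n + m) 3

theorem tree_oscillatory_integral_one_sided_general
    (T : TernaryTree) {t : ℝ} (ht : 0 ≤ t) (σ : T.Idx → ℝ) {S : Set T.Idx}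
    [DecidablePred (· ∈ S)] (hS : T.IsIndependent S) :
    ‖∫ s in T.simplex t, (∏ v : T.Idx, Complex.exp (Complex.I * σ v * s v))
        ∂(Measure.pi fun _ : T.Idx => (volume : Measure ℝ))‖ ≤
      √(4 + t ^ 2) ^ (Finset.univ.filter (· ∈ S)).card *
        t ^ (Finset.univ.filter (· ∉ S)).card *
        ∏ v ∈ Finset.univ.filter (· ∈ S), (√(1 + σ v ^ 2))⁻¹ := by
  let B (v : T.Idx) : ℝ := if v ∈ S then √(4 + t ^ 2) * (√(1 + σ v ^ 2))⁻¹ else t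
  have hosc : ∀ v ∈ S,
      HasPrimitiveBound 0 t (fun r : ℝ => Complex.exp (Complex.I * σ v * r)) (B v) := by
    intro v hv
    simpa only [B, if_pos hv, sub_zero] using hasPrimitiveBound_cexp (σ v) 0 t
  have hsize : ∀ v ∉ S, ∫ u in 0..t, ‖Complex.exp (Complex.I * σ v * u)‖ ≤ B v := by
    intro v hv
    simp only [B, if_neg hv, norm_cexp_I_mul_ofReal_mul_ofReal, integral_one, sub_zero, le_refl]
  refine (TernaryTree.norm_setIntegral_simplex_prod_le ht (fun v => by fun_prop) hS hosc
    hsize).trans_eq ?_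
  simp only [B, Finset.prod_ite, Finset.prod_mul_distrib, Finset.prod_const]
  ring

/-- One-sided estimate in Lemma 3.2: with `O` (resp. `E`) the internal nodes of
odd (resp. even) depth, `|∫_{R(T,t)} ∏ e^{iσ_v s_v} ds| ≤ 2^{|T⁰|} t^{|E|}
∏_{v∈O} ⟨σ_v⟩^{-1}`. -/
theorem tree_oscillatory_integral_one_sided
    (T : TernaryTree) (t : ℝ) (ht : t ∈ Set.Icc (0:ℝ) 1) (σ : T.Idx → ℝ) :
    ‖∫ s in T.simplex t, (∏ v : T.Idx, Complex.exp (Complex.I * σ v * s v))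
        ∂(Measure.pi fun _ : T.Idx => (volume : Measure ℝ))‖ ≤
      2 ^ (Fintype.card T.Idx) *
        t ^ ((Finset.univ.filter fun v : T.Idx => T.depth v % 2 = 0).card) *
        ∏ v ∈ Finset.univ.filter fun v : T.Idx => T.depth v % 2 = 1,
          (Real.sqrt (1 + σ v ^ 2))⁻¹ := by
  have hsqrt : √(4 + t ^ 2) ≤ 5 / 2 := Real.sqrt_le_iff.2 ⟨by norm_num, by nlinarith [ht.1, ht.2]⟩
  have hodd := pow_le_two_pow_add (Real.sqrt_nonneg _) hsqrt T.card_odd_le_and_card_even_le.1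
  rw [← T.card_idx_eq_card_even_add_card_odd] at hodd
  have hbound := tree_oscillatory_integral_one_sided_general T ht.1 σ T.isIndependent_odd_depth
  simp only [Set.mem_ofPred_eq, Nat.mod_two_not_eq_one] at hbound
  refine hbound.trans (mul_le_mul_of_nonneg_right ?_ (by positivity))
  exact mul_le_mul_of_nonneg_right hodd (pow_nonneg ht.1 _)
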